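/- Let V be a 24-dimensional real inner product space, Υ a lattice in V such that √2·Υ is even and unimodular, and M, N a polarization of Υ in which M and N are both even unimodular lattices (Niemeier lattices). Then: (iii) if √2·Υ has minimum norm 4 (i.e. 2⟪v,v⟫ ≥ 4 for all nonzero v ∈ Υ) and μ(M) = 4, then μ(L(M,N,3)) ≥ 6; and (iv) if in addition μ(N) = 2, then μ(L(M,N,3)) = 6. -/

import Mathlib

/-!
Let `m` bound the norms of nonzero vectors of `Υ` from below, and let `2m` do so for `M`. Then
`4m` does so for `M ∩ N = 2Υ`. The coordinates of `v ∈ L(M,N,k)` lie in `Υ`, so `⟪v,v⟫ ≥ km` if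
none of them vanishes. If one vanishes, then `v ∈ L_M`: either at least two coordinates are nonzero
vectors of `M`, or the only nonzero coordinate is the coordinate sum, which lies in `2Υ`; hence
`⟪v,v⟫ ≥ 4m`. The diagonal vectors give the upper bound `k · μ(N)`.
-/

noncomputable section

open scoped RealInnerProductSpace Pointwise
open Module

variable {V : Type*} [NormedAddCommGroup V] [InnerProductSpace ℝ V]

/-- `L` is a (full) lattice in `V`: a finitely generated `ℤ`-submodule spanning `V` over `ℝ`. -/
def IsLat (L : Submodule ℤ V) : Prop :=
  L.FG ∧ Submodule.span ℝ (L : Set V) = ⊤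

/-- The lattice `L` is integral: all inner products of lattice vectors are integers. -/
def IsIntegralLat (L : Submodule ℤ V) : Prop :=
  ∀ x ∈ L, ∀ y ∈ L, ∃ n : ℤ, ⟪x, y⟫ = (n : ℝ)

/-- The lattice `L` is even: it is integral and all norms are even integers. -/
def IsEvenLat (L : Submodule ℤ V) : Prop :=
  IsIntegralLat L ∧ ∀ x ∈ L, ∃ n : ℤ, ⟪x, x⟫ = 2 * (n : ℝ)

/-- The lattice `L` is unimodular: the Gram matrix of some `ℤ`-basis has determinant 1. -/
def IsUnimodularLat (L : Submodule ℤ V) : Prop :=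
  ∃ (n : ℕ) (b : Basis (Fin n) ℤ L),
    (Matrix.of fun i j : Fin n => ⟪(b i : V), (b j : V)⟫).det = 1

/-- The minimum norm `μ(L)` of a lattice. -/
def minNorm (L : Submodule ℤ V) : ℝ :=
  sInf {r : ℝ | ∃ x ∈ L, x ≠ 0 ∧ ⟪x, x⟫ = r}

/-- `√2·Υ` is an even unimodular lattice: all norms of `Υ` are integers, all doubled inner
products are integers, and the Gram matrix of the form `2⟪·,·⟫` on a `ℤ`-basis of `Υ` has
determinant 1. -/
def SqrtTwoEvenUnimod (Υ : Submodule ℤ V) : Prop :=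
  (∀ x ∈ Υ, ∃ n : ℤ, ⟪x, x⟫ = (n : ℝ)) ∧
  (∀ x ∈ Υ, ∀ y ∈ Υ, ∃ n : ℤ, 2 * ⟪x, y⟫ = (n : ℝ)) ∧
  ∃ (n : ℕ) (b : Basis (Fin n) ℤ Υ),
    (Matrix.of fun i j : Fin n => 2 * ⟪(b i : V), (b j : V)⟫).det = 1

/-- `M, N` is a polarization of `Υ`: a pair of integral sublattices with
`M + N = Υ` and `M ∩ N = 2Υ`. -/
def IsPolarization (Υ M N : Submodule ℤ V) : Prop :=
  M ≤ Υ ∧ N ≤ Υ ∧ IsIntegralLat M ∧ IsIntegralLat N ∧ M ⊔ N = Υ ∧ M ⊓ N = (2 : ℤ) • Υ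

/-- The sublattice `L_M = {(x_1,…,x_k) ∈ M^k : x_1+⋯+x_k ∈ M ∩ N}` of `V^k`. -/
def LsubM (M N : Submodule ℤ V) (k : ℕ) : Submodule ℤ (PiLp 2 fun _ : Fin k => V) where
  carrier := {v | (∀ i, v i ∈ M) ∧ (∑ i, v i) ∈ M ⊓ N}
  add_mem' := fun {a b} ha hb =>
    ⟨fun i => M.add_mem (ha.1 i) (hb.1 i), by
      have h : (∑ i, (a + b) i) = (∑ i, a i) + ∑ i, b i :=
        (Finset.sum_congr rfl fun i _ => rfl).trans Finset.sum_add_distrib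
      rw [h]; exact (M ⊓ N).add_mem ha.2 hb.2⟩
  zero_mem' := ⟨fun _ => M.zero_mem, by
      have h : (∑ i : Fin k, (0 : PiLp 2 fun _ : Fin k => V) i) = 0 :=
        Finset.sum_eq_zero fun _ _ => rfl
      rw [h]; exact (M ⊓ N).zero_mem⟩
  smul_mem' := fun c a ha =>
    ⟨fun i => M.smul_mem c (ha.1 i), by
      have h : (∑ i, (c • a) i) = c • ∑ i, a i := by
        show (∑ i, c • a i) = c • ∑ i, a i
        exact Finset.smul_sum.symm
      rw [h]; exact (M ⊓ N).smul_mem c ha.2⟩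

/-- The diagonal sublattice `L^N = {(y,…,y) : y ∈ N}` of `V^k`. -/
def LsupN (N : Submodule ℤ V) (k : ℕ) : Submodule ℤ (PiLp 2 fun _ : Fin k => V) where
  carrier := {v | ∃ y ∈ N, ∀ i, v i = y}
  add_mem' := fun {a b} ha hb => by
    obtain ⟨ya, hya, ha⟩ := ha
    obtain ⟨yb, hyb, hb⟩ := hb
    exact ⟨ya + yb, N.add_mem hya hyb, fun i => by
      show a i + b i = ya + yb
      rw [ha i, hb i]⟩
  zero_mem' := ⟨0, N.zero_mem, fun _ => rfl⟩
  smul_mem' := fun c a ha => by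
    obtain ⟨y, hy, h⟩ := ha
    exact ⟨c • y, N.smul_mem c hy, fun i => by
      show c • a i = c • y
      rw [h i]⟩

/-- The lattice `L(M,N,k) = L_M + L^N ⊆ V^k`. -/
def LMN (M N : Submodule ℤ V) (k : ℕ) : Submodule ℤ (PiLp 2 fun _ : Fin k => V) :=
  LsubM M N k ⊔ LsupN N k

/-- The Leech polarization setup: `V` is 24-dimensional, `√2·Υ` is even unimodular with
minimum norm 4, and `M, N` is a polarization of `Υ` by two copies of the Leech lattice. -/
def LeechSetup (Υ M N : Submodule ℤ V) : Prop :=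
  Module.finrank ℝ V = 24 ∧ IsLat Υ ∧ SqrtTwoEvenUnimod Υ ∧
  (∀ v ∈ Υ, v ≠ 0 → 4 ≤ 2 * ⟪v, v⟫) ∧
  IsPolarization Υ M N ∧
  IsLat M ∧ IsEvenLat M ∧ IsUnimodularLat M ∧ minNorm M = 4 ∧
  IsLat N ∧ IsEvenLat N ∧ IsUnimodularLat N ∧ minNorm N = 4

/-- `(w,x,y,z) ∈ N × M × M × M` is admissible if `x + y + z ∈ M ∩ N`. -/
def Admissible (M N : Submodule ℤ V) (w x y z : V) : Prop :=
  w ∈ N ∧ x ∈ M ∧ y ∈ M ∧ z ∈ M ∧ x + y + z ∈ M ⊓ N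

/-- An offender is an admissible quadruple all three of whose associated vectors
`w+x, w+y, w+z` have norm 2. -/
def Offender (M N : Submodule ℤ V) (w x y z : V) : Prop :=
  Admissible M N w x y z ∧
  ⟪w + x, w + x⟫ = 2 ∧ ⟪w + y, w + y⟫ = 2 ∧ ⟪w + z, w + z⟫ = 2

/-- A super offender is an offender with `⟪w,w⟫ = 4` whose multiset of norms
`{⟪x,x⟫, ⟪y,y⟫, ⟪z,z⟫}` equals `{6,6,4}`. -/
def SuperOffender (M N : Submodule ℤ V) (w x y z : V) : Prop :=
  Offender M N w x y z ∧ ⟪w, w⟫ = 4 ∧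
  ({⟪x, x⟫, ⟪y, y⟫, ⟪z, z⟫} : Multiset ℝ) = ({6, 6, 4} : Multiset ℝ)

section MinNorm

variable {L : Submodule ℤ V}

theorem minNorm_bot : minNorm (⊥ : Submodule ℤ V) = 0 := by
  have no_norms : {r : ℝ | ∃ x ∈ (⊥ : Submodule ℤ V), x ≠ 0 ∧ ⟪x, x⟫ = r} = ∅ :=
    Set.eq_empty_of_forall_notMem fun _ ⟨_, hx, hx0, _⟩ => hx0 ((Submodule.mem_bot ℤ).1 hx)
  rw [minNorm, no_norms, Real.sInf_empty]

theorem ne_bot_of_minNorm_pos (h : 0 < minNorm L) : L ≠ ⊥ := by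
  rintro rfl
  exact h.ne' minNorm_bot

theorem minNorm_le_inner_self {x : V} (hx : x ∈ L) (hx0 : x ≠ 0) : minNorm L ≤ ⟪x, x⟫ :=
  csInf_le ⟨0, by rintro _ ⟨y, -, -, rfl⟩; exact real_inner_self_nonneg⟩ ⟨x, hx, hx0, rfl⟩

theorem le_minNorm {m : ℝ} (hL : L ≠ ⊥) (h : ∀ x ∈ L, x ≠ 0 → m ≤ ⟪x, x⟫) : m ≤ minNorm L := by
  obtain ⟨x, hx, hx0⟩ := L.exists_mem_ne_zero_of_ne_bot hL
  refine le_csInf ⟨_, x, hx, hx0, rfl⟩ ?_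
  rintro _ ⟨y, hy, hy0, rfl⟩
  exact h y hy hy0

end MinNorm

theorem ne_bot_of_smul_le {G : Type*} [AddCommGroup G] [IsAddTorsionFree G]
    {L L' : Submodule ℤ G} {n : ℤ} (hn : n ≠ 0) (hL : L ≠ ⊥) (h : n • L ≤ L') : L' ≠ ⊥ := by
  obtain ⟨x, hx, hx0⟩ := L.exists_mem_ne_zero_of_ne_bot hL
  exact L'.ne_bot_iff.2
    ⟨n • x, h (Submodule.smul_mem_pointwise_smul x n L hx), smul_ne_zero hn hx0⟩

theorem sq_mul_le_inner_self_of_mem_smul {L : Submodule ℤ V} {n : ℤ} {m : ℝ}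
    (hL : ∀ x ∈ L, x ≠ 0 → m ≤ ⟪x, x⟫) {u : V} (hu : u ∈ n • L) (hu0 : u ≠ 0) :
    (n : ℝ) ^ 2 * m ≤ ⟪u, u⟫ := by
  obtain ⟨x, hx, rfl⟩ := (Submodule.mem_smul_pointwise_iff_exists _ _ _).1 hu
  have hx0 : x ≠ 0 := right_ne_zero_of_smul hu0
  calc (n : ℝ) ^ 2 * m ≤ (n : ℝ) ^ 2 * ⟪x, x⟫ := by gcongr; exact hL x hx hx0
    _ = ⟪n • x, n • x⟫ := by
      rw [← Int.cast_smul_eq_zsmul ℝ, real_inner_smul_left, real_inner_smul_right]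
      ring

section Product

variable {k : ℕ} (v : PiLp 2 fun _ : Fin k => V)

theorem sum_inner_self_apply_le (s : Finset (Fin k)) : ∑ i ∈ s, ⟪v i, v i⟫ ≤ ⟪v, v⟫ := by
  rw [PiLp.inner_apply]
  exact Finset.sum_le_univ_sum_of_nonneg fun _ => real_inner_self_nonneg

variable {v}

theorem mul_le_inner_self_of_forall_le {m : ℝ} (h : ∀ i, m ≤ ⟪v i, v i⟫) : k * m ≤ ⟪v, v⟫ := by
  simpa only [PiLp.inner_apply, Finset.card_univ, Fintype.card_fin, nsmul_eq_mul] using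
    Finset.univ.card_nsmul_le_sum _ m fun i _ => h i

end Product

section Membership

variable {W : Type*} [NormedAddCommGroup W] {M N : Submodule ℤ W} {k : ℕ}
  {v : PiLp 2 fun _ : Fin k => W} {i : Fin k}

theorem toLp_const_mem_LMN {w : W} (hw : w ∈ N) : WithLp.toLp 2 (fun _ => w) ∈ LMN M N k :=
  Submodule.mem_sup_right ⟨w, hw, fun _ => rfl⟩

theorem toLp_const_ne_zero [NeZero k] {w : W} (hw0 : w ≠ 0) :
    (WithLp.toLp 2 fun _ => w : PiLp 2 fun _ : Fin k => W) ≠ 0 :=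
  fun h => hw0 (congrArg (fun u : PiLp 2 fun _ : Fin k => W => u 0) h)

theorem LMN_ne_bot [NeZero k] (hN : N ≠ ⊥) : LMN M N k ≠ ⊥ := by
  obtain ⟨w, hw, hw0⟩ := N.exists_mem_ne_zero_of_ne_bot hN
  exact (Submodule.ne_bot_iff _).2 ⟨_, toLp_const_mem_LMN hw, toLp_const_ne_zero hw0⟩

theorem apply_mem_sup_of_mem_LMN (hv : v ∈ LMN M N k) (i : Fin k) : v i ∈ M ⊔ N := by
  obtain ⟨a, ha, b, ⟨w, hw, hb⟩, rfl⟩ := Submodule.mem_sup.1 hv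
  exact Submodule.add_mem_sup (ha.1 i) (by rw [← hb i] at hw; exact hw)

theorem LsupN_inf_le_LsubM : LsupN (M ⊓ N) k ≤ LsubM M N k := by
  rintro v ⟨w, hw, hv⟩
  exact ⟨fun i => (hv i).symm ▸ hw.1, Submodule.sum_mem _ fun i _ => (hv i).symm ▸ hw⟩

theorem mem_LsubM_of_mem_LMN_of_apply_eq_zero (hv : v ∈ LMN M N k) (hvi : v i = 0) :
    v ∈ LsubM M N k := by
  obtain ⟨a, ha, b, ⟨w, hwN, hb⟩, rfl⟩ := Submodule.mem_sup.1 hv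
  have hw : w = -a i := by
    rw [← hb i]
    exact eq_neg_of_add_eq_zero_right hvi
  have hwM : w ∈ M := hw ▸ M.neg_mem (ha.1 i)
  exact Submodule.add_mem _ ha (LsupN_inf_le_LsubM ⟨w, ⟨hwM, hwN⟩, hb⟩)

end Membership

section Bounds

variable {M N : Submodule ℤ V} {k : ℕ} {v : PiLp 2 fun _ : Fin k => V}

theorem minNorm_LMN_le [NeZero k] (hN : N ≠ ⊥) : minNorm (LMN M N k) ≤ k * minNorm N := by
  have hk : (0 : ℝ) < k := Nat.cast_pos.2 (NeZero.pos k)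
  rw [← div_le_iff₀' hk]
  refine le_minNorm hN fun w hw hw0 => (div_le_iff₀' hk).2 ?_
  simpa only [PiLp.inner_apply, Finset.sum_const, Finset.card_univ, Fintype.card_fin,
    nsmul_eq_mul] using
    minNorm_le_inner_self (toLp_const_mem_LMN (M := M) (k := k) hw) (toLp_const_ne_zero hw0)

theorem two_mul_le_inner_self_of_mem_LsubM {c : ℝ} (hM : ∀ x ∈ M, x ≠ 0 → c ≤ ⟪x, x⟫)
    (hMN : ∀ x ∈ M ⊓ N, x ≠ 0 → 2 * c ≤ ⟪x, x⟫) (hv : v ∈ LsubM M N k) (hv0 : v ≠ 0) :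
    2 * c ≤ ⟪v, v⟫ := by
  obtain ⟨i, hi⟩ : ∃ i, v i ≠ 0 := by
    by_contra! h
    exact hv0 (PiLp.ext h)
  by_cases hunique : ∀ j, j ≠ i → v j = 0
  · have hsum : ∑ j, v j = v i := Fintype.sum_eq_single i hunique
    calc 2 * c ≤ ⟪v i, v i⟫ := hMN _ (hsum ▸ hv.2) hi
      _ ≤ ⟪v, v⟫ := by simpa only [Finset.sum_singleton] using sum_inner_self_apply_le v {i}
  · push Not at hunique
    obtain ⟨j, hji, hj⟩ := hunique
    calc 2 * c ≤ ⟪v j, v j⟫ + ⟪v i, v i⟫ := by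
          linarith [hM _ (hv.1 j) hj, hM _ (hv.1 i) hi]
      _ ≤ ⟪v, v⟫ := by simpa only [Finset.sum_pair hji] using sum_inner_self_apply_le v {j, i}

theorem min_mul_le_inner_self_of_mem_LMN {c m : ℝ} (hMN : ∀ x ∈ M ⊔ N, x ≠ 0 → m ≤ ⟪x, x⟫)
    (hM : ∀ x ∈ M, x ≠ 0 → c ≤ ⟪x, x⟫) (hinf : ∀ x ∈ M ⊓ N, x ≠ 0 → 2 * c ≤ ⟪x, x⟫)
    (hv : v ∈ LMN M N k) (hv0 : v ≠ 0) : min (k * m) (2 * c) ≤ ⟪v, v⟫ := by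
  by_cases h : ∃ i, v i = 0
  · obtain ⟨i, hi⟩ := h
    exact min_le_of_right_le <| two_mul_le_inner_self_of_mem_LsubM hM hinf
      (mem_LsubM_of_mem_LMN_of_apply_eq_zero hv hi) hv0
  · push Not at h
    exact min_le_of_left_le <|
      mul_le_inner_self_of_forall_le fun i => hMN _ (apply_mem_sup_of_mem_LMN hv i) (h i)

end Bounds

theorem statement9_general {m : ℝ} (hm : 0 < m) {k : ℕ} [NeZero k] {Υ M N : Submodule ℤ V}
    (hΥ : ∀ v ∈ Υ, v ≠ 0 → m ≤ ⟪v, v⟫) (hsup : M ⊔ N ≤ Υ) (hinf : M ⊓ N = (2 : ℤ) • Υ)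
    (hM : 2 * m ≤ minNorm M) :
    min (k * m) (4 * m) ≤ minNorm (LMN M N k) ∧
    (minNorm N = m → k ≤ 4 → minNorm (LMN M N k) = k * m) := by
  have hM0 : M ≠ ⊥ := ne_bot_of_minNorm_pos (by linarith)
  have two_smul_le : (2 : ℤ) • M ≤ N :=
    (smul_mono_right _ (le_sup_left.trans hsup)).trans (hinf ▸ inf_le_right)
  have : IsAddTorsionFree V := .of_isTorsionFree ℝ V
  have hN0 : N ≠ ⊥ := ne_bot_of_smul_le two_ne_zero hM0 two_smul_le
  have norm_inf : ∀ x ∈ M ⊓ N, x ≠ 0 → 2 * (2 * m) ≤ ⟪x, x⟫ := fun x hx hx0 => by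
    have h4m : ((2 : ℤ) : ℝ) ^ 2 * m ≤ ⟪x, x⟫ :=
      sq_mul_le_inner_self_of_mem_smul hΥ (hinf ▸ hx) hx0
    push_cast at h4m
    linarith
  have lower : min (k * m) (4 * m) ≤ minNorm (LMN M N k) := by
    refine le_minNorm (LMN_ne_bot hN0) fun v hv hv0 => ?_
    rw [show 4 * m = 2 * (2 * m) by ring]
    exact min_mul_le_inner_self_of_mem_LMN (fun x hx => hΥ x (hsup hx))
      (fun x hx hx0 => hM.trans (minNorm_le_inner_self hx hx0)) norm_inf hv hv0
  refine ⟨lower, fun hN hk => le_antisymm (hN ▸ minNorm_LMN_le hN0) ?_⟩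
  have hkm : k * m ≤ 4 * m := by gcongr; exact_mod_cast hk
  exact min_eq_left hkm ▸ lower

/-- for a polarization of `Υ` by Niemeier lattices `M, N`:
(iii) if `√2·Υ` has minimum norm 4 and `μ(M) = 4` then `μ(L(M,N,3)) ≥ 6`;
(iv) if in addition `μ(N) = 2` then `μ(L(M,N,3)) = 6`. -/
theorem statement9 [FiniteDimensional ℝ V] (hdim : finrank ℝ V = 24)
    (Υ M N : Submodule ℤ V) (hΥlat : IsLat Υ) (hΥ : SqrtTwoEvenUnimod Υ)
    (hΥ4 : ∀ v ∈ Υ, v ≠ 0 → 4 ≤ 2 * ⟪v, v⟫)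
    (hpol : IsPolarization Υ M N)
    (hM : IsLat M ∧ IsEvenLat M ∧ IsUnimodularLat M)
    (hN : IsLat N ∧ IsEvenLat N ∧ IsUnimodularLat N) :
    (minNorm M = 4 → 6 ≤ minNorm (LMN M N 3)) ∧
    (minNorm M = 4 → minNorm N = 2 → minNorm (LMN M N 3) = 6) := by
  have general (hM4 : minNorm M = 4) := statement9_general (k := 3) two_pos
    (fun v hv hv0 => by linarith [hΥ4 v hv hv0]) hpol.2.2.2.2.1.le hpol.2.2.2.2.2
    (show 2 * 2 ≤ minNorm M by linarith)
  exact ⟨fun hM4 => le_trans (by norm_num) (general hM4).1,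
    fun hM4 hN2 => ((general hM4).2 hN2 (by norm_num)).trans (by norm_num)⟩
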